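/- Let n ∈ ℕ and let A, B, J, K ∈ Matrix (Fin n) (Fin n) ℝ with J and K invertible, and suppose Kᵀ · B = Bᵀ · K (equivalently, the matrix B · K⁻¹ is symmetric). Then det(A · J⁻¹ − B · K⁻¹) · det(J) · det(Kᵀ) = det(Kᵀ · A − Bᵀ · J). -/

import Mathlib

open Matrix

section

variable {l m n R : Type*} [Fintype m] [Fintype n] [DecidableEq n] [CommRing R]

theorem mul_mul_nonsing_inv_eq_of_mul_eq_mul {L : Matrix l m R} {M : Matrix l n R}
    {B : Matrix m n R} {K : Matrix n n R} (hK : IsUnit K.det) (hLM : L * B = M * K) :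
    L * (B * K⁻¹) = M := by
  rw [← Matrix.mul_assoc, hLM, mul_nonsing_inv_cancel_right K M hK]

theorem mul_sub_mul_nonsing_inv_mul_eq_sub {L : Matrix l m R} {M : Matrix l n R}
    (A : Matrix m n R) {B : Matrix m n R} {J K : Matrix n n R}
    (hJ : IsUnit J.det) (hK : IsUnit K.det) (hLM : L * B = M * K) :
    L * (A * J⁻¹ - B * K⁻¹) * J = L * A - M * J := by
  calc L * (A * J⁻¹ - B * K⁻¹) * J
      = (L * (A * J⁻¹) - M) * J := by
        rw [Matrix.mul_sub, mul_mul_nonsing_inv_eq_of_mul_eq_mul hK hLM]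
    _ = L * A - M * J := by
        rw [Matrix.sub_mul, Matrix.mul_assoc, nonsing_inv_mul_cancel_right J A hJ]

-- For `L = Kᵀ` and `M = Bᵀ`, `hLM` is the symmetry of the shape operator `B * K⁻¹`.
theorem det_shape_operator_wronskian_general (A : Matrix n n R) {B J K L M : Matrix n n R}
    (hJ : IsUnit J.det) (hK : IsUnit K.det) (hLM : L * B = M * K) :
    (A * J⁻¹ - B * K⁻¹).det * J.det * L.det = (L * A - M * J).det := by
  rw [← mul_sub_mul_nonsing_inv_mul_eq_sub A hJ hK hLM, det_mul, det_mul]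
  ring

end

/-- The determinant manipulation for the amplitude determinant factor:
if `J`, `K` are invertible and `Kᵀ·B = Bᵀ·K`, then
`det(A·J⁻¹ − B·K⁻¹) · det J · det Kᵀ = det(Kᵀ·A − Bᵀ·J)`. -/
theorem det_shape_operator_wronskian
    (n : ℕ) (A B J K : Matrix (Fin n) (Fin n) ℝ)
    (hJ : IsUnit J.det) (hK : IsUnit K.det)
    (hsym : Kᵀ * B = Bᵀ * K) :
    (A * J⁻¹ - B * K⁻¹).det * J.det * Kᵀ.det = (Kᵀ * A - Bᵀ * J).det :=
  det_shape_operator_wronskian_general A hJ hK hsym
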